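/- For every R > 0 there is a constant C(R), depending only on R, such that for every probability density G on ℝ³ × ℝ³ with finite Fisher information I(G) := ∫_{ℝ⁶} |∇G|²/G < ∞, one has ∫_{B_R × B_R} G(v,w)/|v−w| dv dw ≤ C(R)·(1 + I(G)), where B_R ⊂ ℝ³ is the closed ball of radius R centered at the origin. -/

import Mathlib

open MeasureTheory Real

noncomputable section

abbrev V3 := Fin 3 → ℝ

/-- Squared Euclidean norm on ℝ³. -/
def sq3 (z : V3) : ℝ := ∑ α, (z α) ^ 2
/-- Euclidean norm on ℝ³. -/
def nrm3 (z : V3) : ℝ := Real.sqrt (sq3 z)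

/-- Partial derivative in the `α`-th coordinate of the first variable `v`. -/
def pdv (G : V3 × V3 → ℝ) (z : V3 × V3) (α : Fin 3) : ℝ :=
  fderiv ℝ G z (Pi.single α 1, 0)

/-- Partial derivative in the `α`-th coordinate of the second variable `w`. -/
def pdw (G : V3 × V3 → ℝ) (z : V3 × V3) (α : Fin 3) : ℝ :=
  fderiv ℝ G z (0, Pi.single α 1)

/-- Fisher information of a density on ℝ³ × ℝ³. -/
def fisher2 (G : V3 × V3 → ℝ) : ℝ :=
  ∫ z : V3 × V3, (∑ α, ((pdv G z α) ^ 2 + (pdw G z α) ^ 2)) / G z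

/-!
The vector field `x / |x|` on a Euclidean space of dimension `d` has length one and divergence
`(d - 1) / |x|`. Testing a density `u ≥ 0` against it and integrating by parts gives the `L¹` Hardy
inequality `(d - 1) ∫ u / |x| ≤ ∫ |∇u|`; to avoid the singularity one works with
`x / √(|x|² + ε)` and lets `ε → 0` by Fatou's lemma. Applied to every slice `v ↦ G (v, w)`, centred
at `w`, this bounds `(d - 1) ∫ G / |v - w|` by `∫ |∇_v G|`, and the Cauchy–Schwarz inequality for
`|∇_v G| = (|∇_v G| / √G) √G` brings in the Fisher information.
-/

open Filter Topology Module InnerProductSpace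

section Divergence

variable {E : Type*} [NormedAddCommGroup E] [NormedSpace ℝ E] [FiniteDimensional ℝ E]

lemma integrable_mul_trace {α : Type*} [MeasurableSpace α] {μ : Measure α} {u : α → ℝ}
    {T : α → E →L[ℝ] E} {B : ℝ} (hu : Integrable u μ) (hT : AEStronglyMeasurable T μ)
    (hTB : ∀ x, ‖T x‖ ≤ B) : Integrable (fun x => u x * LinearMap.trace ℝ E (T x)) μ := by
  let tr : (E →L[ℝ] E) →L[ℝ] ℝ :=
    (LinearMap.trace ℝ E ∘ₗ ContinuousLinearMap.coeLM ℝ).toContinuousLinearMap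
  exact hu.mul_bdd (tr.continuous.comp_aestronglyMeasurable hT)
    (ae_of_all _ fun x => tr.le_opNorm_of_le (hTB x))

theorem integral_mul_trace_fderiv_eq_neg [MeasurableSpace E] [BorelSpace E] {μ : Measure E}
    [μ.IsAddHaarMeasure] {u : E → ℝ} {F : E → E} {A B : ℝ} (hu : Differentiable ℝ u)
    (hF : Differentiable ℝ F) (hui : Integrable u μ) (hu' : Integrable (fderiv ℝ u) μ)
    (hFA : ∀ x, ‖F x‖ ≤ A) (hFB : ∀ x, ‖fderiv ℝ F x‖ ≤ B) :
    ∫ x, u x * LinearMap.trace ℝ E (fderiv ℝ F x) ∂μ = -∫ x, fderiv ℝ u x (F x) ∂μ := by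
  let b := finBasis ℝ E
  let ℓ i : StrongDual ℝ E := (b.coord i).toContinuousLinearMap
  have hderiv i x : fderiv ℝ (fun y => ℓ i (F y)) x (b i) = ℓ i (fderiv ℝ F x (b i)) :=
    DFunLike.congr_fun ((ℓ i).hasFDerivAt.comp x (hF x).hasFDerivAt).fderiv (b i)
  have htrace x : LinearMap.trace ℝ E (fderiv ℝ F x) = ∑ i, ℓ i (fderiv ℝ F x (b i)) := by
    simp [LinearMap.trace_eq_matrix_trace ℝ b, Matrix.trace, LinearMap.toMatrix_apply, ℓ]
  have hexpand x : fderiv ℝ u x (F x) = ∑ i, fderiv ℝ u x (b i) * ℓ i (F x) := by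
    conv_lhs => rw [← b.sum_repr (F x)]
    simp only [map_sum, map_smul, smul_eq_mul, mul_comm]
    rfl
  have hu'F i : Integrable (fun x => fderiv ℝ u x (b i) * ℓ i (F x)) μ :=
    (hu'.apply_continuousLinearMap (b i)).mul_bdd
      ((ℓ i).continuous.comp hF.continuous).aestronglyMeasurable
      (ae_of_all _ fun x => (ℓ i).le_opNorm_of_le (hFA x))
  have huF' i : Integrable (fun x => u x * ℓ i (fderiv ℝ F x (b i))) μ :=
    hui.mul_bdd
      ((ℓ i).measurable.comp (measurable_fderiv_apply_const ℝ F (b i))).aestronglyMeasurable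
      (ae_of_all _ fun x => (ℓ i).le_opNorm_of_le
        ((fderiv ℝ F x).le_of_opNorm_le (hFB x) (b i)))
  have huF i : Integrable (fun x => u x * ℓ i (F x)) μ :=
    hui.mul_bdd ((ℓ i).continuous.comp hF.continuous).aestronglyMeasurable
      (ae_of_all _ fun x => (ℓ i).le_opNorm_of_le (hFA x))
  have hparts i : ∫ x, u x * ℓ i (fderiv ℝ F x (b i)) ∂μ
      = -∫ x, fderiv ℝ u x (b i) * ℓ i (F x) ∂μ := by
    simpa only [hderiv] using integral_mul_fderiv_eq_neg_fderiv_mul_of_integrable (v := b i)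
      (hu'F i) (by simpa only [hderiv] using huF' i) (huF i) (fun x _ => hu x)
      (fun x _ => (ℓ i).differentiableAt.comp x (hF x))
  simp only [htrace, hexpand, Finset.mul_sum]
  rw [integral_finsetSum _ fun i _ => huF' i, integral_finsetSum _ fun i _ => hu'F i,
    ← Finset.sum_neg_distrib]
  exact Finset.sum_congr rfl fun i _ => hparts i

end Divergence

section RegNorm

variable {E : Type*} [NormedAddCommGroup E] {ε : ℝ}

/-- Smooth regularization `√(‖x‖² + ε)` of the norm. -/
def regNorm (ε : ℝ) (x : E) : ℝ := √(‖x‖ ^ 2 + ε)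

lemma regNorm_pos (hε : 0 < ε) (x : E) : 0 < regNorm ε x :=
  sqrt_pos.2 (by positivity)

lemma sqrt_le_regNorm (x : E) : √ε ≤ regNorm ε x :=
  sqrt_le_sqrt (le_add_of_nonneg_left (sq_nonneg _))

lemma norm_le_regNorm (hε : 0 < ε) (x : E) : ‖x‖ ≤ regNorm ε x :=
  le_sqrt_of_sq_le (le_add_of_nonneg_right hε.le)

lemma continuous_regNorm : Continuous (regNorm ε : E → ℝ) := by
  unfold regNorm
  fun_prop

lemma sq_norm_div_regNorm_pow_three_le (hε : 0 < ε) (x : E) :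
    ‖x‖ ^ 2 / regNorm ε x ^ 3 ≤ (regNorm ε x)⁻¹ := by
  have hρ := regNorm_pos hε x
  calc ‖x‖ ^ 2 / regNorm ε x ^ 3 ≤ regNorm ε x ^ 2 / regNorm ε x ^ 3 := by
        gcongr
        exact norm_le_regNorm hε x
    _ = (regNorm ε x)⁻¹ := by field_simp

lemma tendsto_regNorm_nhds_norm (x : E) : Tendsto (regNorm · x) (𝓝 0) (𝓝 ‖x‖) := by
  have h : Continuous (regNorm · x) := by
    unfold regNorm
    fun_prop
  simpa [regNorm] using h.tendsto 0

lemma integrable_div_regNorm [MeasurableSpace E] [BorelSpace E] {μ : Measure E} {u : E → ℝ}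
    (hε : 0 < ε) (hui : Integrable u μ) :
    Integrable (fun x => u x / regNorm ε x) μ := by
  simp only [div_eq_mul_inv]
  refine hui.mul_bdd (c := (√ε)⁻¹)
    (continuous_regNorm.inv₀ fun x => (regNorm_pos hε x).ne').aestronglyMeasurable
    (ae_of_all _ fun x => ?_)
  rw [norm_inv, norm_of_nonneg (regNorm_pos hε x).le]
  gcongr
  exact sqrt_le_regNorm x

lemma ofReal_div_norm_le_liminf (u : E → ℝ) (x : E) :
    ENNReal.ofReal (u x / ‖x‖)
      ≤ liminf (fun ε => ENNReal.ofReal (u x / regNorm ε x)) (𝓝[>] 0) := by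
  by_cases hx : ‖x‖ = 0
  -- Here the left-hand side vanishes because `u x / 0 = 0`.
  · simp [hx]
  · have hlim := (tendsto_regNorm_nhds_norm x).mono_left (nhdsWithin_le_nhds (s := Set.Ioi 0))
    exact (ENNReal.tendsto_ofReal (tendsto_const_nhds.div hlim hx)).liminf_eq.ge

variable [InnerProductSpace ℝ E]

/-- The regularized radial unit vector field `x / √(‖x‖² + ε)`. -/
def regDir (ε : ℝ) (x : E) : E := (regNorm ε x)⁻¹ • x

lemma norm_regDir_le_one (hε : 0 < ε) (x : E) : ‖regDir ε x‖ ≤ 1 := by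
  have hρ := regNorm_pos hε x
  rw [regDir, norm_smul, norm_inv, norm_of_nonneg hρ.le, inv_mul_le_one₀ hρ]
  exact norm_le_regNorm hε x

lemma hasFDerivAt_regNorm (hε : 0 < ε) (x : E) :
    HasFDerivAt (regNorm ε) ((regNorm ε x)⁻¹ • innerSL ℝ x) x := by
  convert! ((hasStrictFDerivAt_norm_sq x).hasFDerivAt.add_const ε).sqrt (by positivity) using 1
  simp only [regNorm]
  module

lemma hasFDerivAt_regDir (hε : 0 < ε) (x : E) :
    HasFDerivAt (regDir ε)
      ((regNorm ε x)⁻¹ • .id ℝ E - (regNorm ε x ^ 3)⁻¹ • rankOne ℝ x x) x := by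
  have hinv := (hasDerivAt_inv (regNorm_pos hε x).ne').comp_hasFDerivAt x
    (hasFDerivAt_regNorm hε x)
  convert! hinv.smul (hasFDerivAt_id x) using 1
  have hcube : (regNorm ε x ^ 3)⁻¹ = (regNorm ε x ^ 2)⁻¹ * (regNorm ε x)⁻¹ := by ring
  ext v
  simp [hcube, smul_smul, sub_eq_add_neg]

lemma norm_fderiv_regDir_le (hε : 0 < ε) (x : E) : ‖fderiv ℝ (regDir ε) x‖ ≤ 2 / √ε := by
  have hρ := regNorm_pos hε x
  have hid : ‖(regNorm ε x)⁻¹ • ContinuousLinearMap.id ℝ E‖ ≤ (regNorm ε x)⁻¹ := by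
    rw [norm_smul, norm_inv, norm_of_nonneg hρ.le]
    exact mul_le_of_le_one_right (by positivity) ContinuousLinearMap.norm_id_le
  have hrank : ‖(regNorm ε x ^ 3)⁻¹ • rankOne ℝ x x‖ ≤ (regNorm ε x)⁻¹ := by
    rw [norm_smul, norm_inv, norm_of_nonneg (by positivity), norm_rankOne, ← sq,
      ← div_eq_inv_mul]
    exact sq_norm_div_regNorm_pow_three_le hε x
  calc ‖fderiv ℝ (regDir ε) x‖ ≤ (regNorm ε x)⁻¹ + (regNorm ε x)⁻¹ := by
        rw [(hasFDerivAt_regDir hε x).fderiv]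
        exact (norm_sub_le _ _).trans (add_le_add hid hrank)
    _ = 2 / regNorm ε x := by ring
    _ ≤ 2 / √ε := by
      gcongr
      exact sqrt_le_regNorm x

lemma trace_fderiv_regDir [FiniteDimensional ℝ E] (hε : 0 < ε) (x : E) :
    LinearMap.trace ℝ E (fderiv ℝ (regDir ε) x)
      = finrank ℝ E / regNorm ε x - ‖x‖ ^ 2 / regNorm ε x ^ 3 := by
  rw [(hasFDerivAt_regDir hε x).fderiv]
  simp [div_eq_inv_mul, trace_rankOne]

lemma div_regNorm_le_trace_fderiv_regDir [FiniteDimensional ℝ E] (hε : 0 < ε) (x : E) :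
    (finrank ℝ E - 1) / regNorm ε x ≤ LinearMap.trace ℝ E (fderiv ℝ (regDir ε) x) := by
  rw [trace_fderiv_regDir hε, sub_div, one_div]
  exact sub_le_sub_left (sq_norm_div_regNorm_pow_three_le hε x) _

end RegNorm

section Hardy

variable {E : Type*} [NormedAddCommGroup E] [InnerProductSpace ℝ E] [FiniteDimensional ℝ E]
  [MeasurableSpace E] [BorelSpace E] {μ : Measure E} {u : E → ℝ} {ε : ℝ}

lemma integral_div_regNorm_le [μ.IsAddHaarMeasure] (hε : 0 < ε)
    (h0 : ∀ x, 0 ≤ u x) (hu : Differentiable ℝ u) (hui : Integrable u μ)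
    (hu' : Integrable (fderiv ℝ u) μ) :
    (finrank ℝ E - 1) * ∫ x, u x / regNorm ε x ∂μ ≤ ∫ x, ‖fderiv ℝ u x‖ ∂μ := by
  have hdiff : Differentiable ℝ (regDir ε : E → E) :=
    fun x => (hasFDerivAt_regDir hε x).differentiableAt
  calc (finrank ℝ E - 1) * ∫ x, u x / regNorm ε x ∂μ
      = ∫ x, u x * ((finrank ℝ E - 1) / regNorm ε x) ∂μ := by
        rw [← integral_const_mul]
        congr! 2
        ring
    _ ≤ ∫ x, u x * LinearMap.trace ℝ E (fderiv ℝ (regDir ε) x) ∂μ := by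
        refine integral_mono ?_ ?_ fun x =>
          mul_le_mul_of_nonneg_left (div_regNorm_le_trace_fderiv_regDir hε x) (h0 x)
        · convert (integrable_div_regNorm hε hui).const_mul (finrank ℝ E - 1 : ℝ) using 2
          ring
        · exact integrable_mul_trace hui (measurable_fderiv ℝ _).aestronglyMeasurable
            (norm_fderiv_regDir_le hε)
    _ = -∫ x, fderiv ℝ u x (regDir ε x) ∂μ :=
        integral_mul_trace_fderiv_eq_neg hu hdiff hui hu' (norm_regDir_le_one hε)
          (norm_fderiv_regDir_le hε)
    _ ≤ ∫ x, ‖fderiv ℝ u x (regDir ε x)‖ ∂μ :=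
        (neg_le_abs _).trans (norm_integral_le_integral_norm (fun x => fderiv ℝ u x (regDir ε x)))
    _ ≤ ∫ x, ‖fderiv ℝ u x‖ ∂μ :=
        integral_mono_of_nonneg (ae_of_all _ fun _ => norm_nonneg _) hu'.norm
          (ae_of_all _ fun x => (fderiv ℝ u x).unit_le_opNorm _ (norm_regDir_le_one hε x))

lemma lintegral_div_regNorm_le [μ.IsAddHaarMeasure] (hε : 0 < ε) (h0 : ∀ x, 0 ≤ u x)
    (hu : Differentiable ℝ u) (hui : Integrable u μ) :
    ENNReal.ofReal (finrank ℝ E - 1) * ∫⁻ x, ENNReal.ofReal (u x / regNorm ε x) ∂μ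
      ≤ ∫⁻ x, ‖fderiv ℝ u x‖ₑ ∂μ := by
  have hnonneg x : 0 ≤ u x / regNorm ε x := div_nonneg (h0 x) (regNorm_pos hε x).le
  rcases eq_or_ne (∫⁻ x, ‖fderiv ℝ u x‖ₑ ∂μ) ⊤ with htop | htop
  · simp [htop]
  have hu' : Integrable (fderiv ℝ u) μ :=
    ⟨(measurable_fderiv ℝ u).aestronglyMeasurable, htop.lt_top⟩
  rw [← ofReal_integral_eq_lintegral_ofReal (integrable_div_regNorm hε hui)
      (ae_of_all _ hnonneg),
    ← ofReal_integral_norm_eq_lintegral_enorm hu',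
    ← ENNReal.ofReal_mul' (integral_nonneg hnonneg)]
  exact ENNReal.ofReal_le_ofReal (integral_div_regNorm_le hε h0 hu hui hu')

theorem lintegral_div_norm_le [μ.IsAddHaarMeasure] (h0 : ∀ x, 0 ≤ u x)
    (hu : Differentiable ℝ u) (hui : Integrable u μ) :
    ENNReal.ofReal (finrank ℝ E - 1) * ∫⁻ x, ENNReal.ofReal (u x / ‖x‖) ∂μ
      ≤ ∫⁻ x, ‖fderiv ℝ u x‖ₑ ∂μ := by
  rcases eq_or_ne (ENNReal.ofReal (finrank ℝ E - 1)) 0 with hd | hd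
  · simp [hd]
  rw [mul_comm]
  refine ENNReal.mul_le_of_le_div ?_
  calc ∫⁻ x, ENNReal.ofReal (u x / ‖x‖) ∂μ
      ≤ ∫⁻ x, liminf (fun ε => ENNReal.ofReal (u x / regNorm ε x)) (𝓝[>] 0) ∂μ :=
        lintegral_mono (ofReal_div_norm_le_liminf u)
    _ ≤ liminf (fun ε => ∫⁻ x, ENNReal.ofReal (u x / regNorm ε x) ∂μ) (𝓝[>] 0) :=
        lintegral_liminf_le fun ε =>
          (hu.continuous.measurable.div continuous_regNorm.measurable).ennreal_ofReal
    _ ≤ (∫⁻ x, ‖fderiv ℝ u x‖ₑ ∂μ) / ENNReal.ofReal (finrank ℝ E - 1) := by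
        refine liminf_le_of_frequently_le' (Eventually.frequently ?_)
        filter_upwards [self_mem_nhdsWithin] with ε hε
        rw [ENNReal.le_div_iff_mul_le (.inl hd) (.inl ENNReal.ofReal_ne_top), mul_comm]
        exact lintegral_div_regNorm_le hε h0 hu hui

theorem lintegral_div_norm_sub_le [μ.IsAddHaarMeasure] (h0 : ∀ x, 0 ≤ u x)
    (hu : Differentiable ℝ u) (hui : Integrable u μ) (c : E) :
    ENNReal.ofReal (finrank ℝ E - 1) * ∫⁻ x, ENNReal.ofReal (u x / ‖x - c‖) ∂μ
      ≤ ∫⁻ x, ‖fderiv ℝ u x‖ₑ ∂μ := by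
  have h := lintegral_div_norm_le (u := fun x => u (x + c)) (fun x => h0 _)
    (hu.comp (differentiable_id.add_const c)) (hui.comp_add_right c)
  rw [← lintegral_add_right_eq_self _ c, ← lintegral_add_right_eq_self (fun x => ‖fderiv ℝ u x‖ₑ) c]
  simpa only [add_sub_cancel_right, fderiv_comp_add_right] using h

end Hardy

section CauchySchwarz

variable {α F : Type*} [MeasurableSpace α] {μ : Measure α} [NormedAddCommGroup F]
  {f : α → F} {g : α → ℝ}

lemma integrable_and_integral_norm_le_sqrt (hf : AEStronglyMeasurable f μ) (hg0 : ∀ x, 0 ≤ g x)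
    (hfg : ∀ x, g x = 0 → f x = 0) (hg : Integrable g μ)
    (hI : Integrable (fun x => ‖f x‖ ^ 2 / g x) μ) :
    Integrable f μ ∧ ∫ x, ‖f x‖ ∂μ ≤ √((∫ x, ‖f x‖ ^ 2 / g x ∂μ) * ∫ x, g x ∂μ) := by
  have hsq x : √(g x) ^ 2 = g x := sq_sqrt (hg0 x)
  have hquot_sq x : (‖f x‖ / √(g x)) ^ 2 = ‖f x‖ ^ 2 / g x := by rw [div_pow, hsq]
  have hmul x : ‖f x‖ / √(g x) * √(g x) = ‖f x‖ := by
    refine div_mul_cancel_of_imp fun h => ?_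
    simp [hfg x ((sqrt_eq_zero (hg0 x)).1 h)]
  have hsqrt_meas : AEStronglyMeasurable (fun x => √(g x)) μ :=
    continuous_sqrt.comp_aestronglyMeasurable hg.1
  have hsqrt : MemLp (fun x => √(g x)) 2 μ := by
    simpa only [memLp_two_iff_integrable_sq hsqrt_meas, hsq] using hg
  have hquot : MemLp (fun x => ‖f x‖ / √(g x)) 2 μ :=
    (memLp_two_iff_integrable_sq (hf.norm.div₀ hsqrt_meas)).2
      (by simpa only [Pi.div_apply, hquot_sq] using hI)
  refine ⟨(integrable_norm_iff hf).1 ?_, ?_⟩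
  · simpa only [Pi.mul_def, hmul] using hquot.integrable_mul hsqrt
  · have h := integral_mul_le_Lp_mul_Lq_of_nonneg HolderConjugate.two_two
      (ae_of_all μ fun x => div_nonneg (norm_nonneg (f x)) (sqrt_nonneg (g x)))
      (ae_of_all μ fun x => sqrt_nonneg (g x)) (by simpa using hquot) (by simpa using hsqrt)
    simp only [hmul, rpow_two, hquot_sq, hsq, ← sqrt_eq_rpow] at h
    rwa [sqrt_mul' _ (integral_nonneg hg0)]

end CauchySchwarz

section FirstVariable

variable {E F : Type*} [NormedAddCommGroup E] [NormedSpace ℝ E] [NormedAddCommGroup F]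
  [NormedSpace ℝ F] {G : E × F → ℝ}

/-- The partial differential of `G` in its first variable. -/
def fderivFst (G : E × F → ℝ) (z : E × F) : StrongDual ℝ E :=
  fderiv ℝ G z ∘L .inl ℝ E F

lemma measurable_fderivFst [MeasurableSpace E] [BorelSpace E] [MeasurableSpace F] [BorelSpace F]
    [FiniteDimensional ℝ E] [FiniteDimensional ℝ F] (G : E × F → ℝ) : Measurable (fderivFst G) :=
  ((ContinuousLinearMap.compL ℝ E (E × F) ℝ).flip (.inl ℝ E F)).measurable.comp
    (measurable_fderiv ℝ G)

lemma fderiv_slice_eq_fderivFst (hG : Differentiable ℝ G) (x : E) (y : F) :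
    fderiv ℝ (fun x => G (x, y)) x = fderivFst G (x, y) :=
  ((hG (x, y)).hasFDerivAt.comp x (hasFDerivAt_prodMk_left x y)).fderiv

lemma fderivFst_eq_zero_of_nonneg_of_eq_zero (h0 : ∀ z, 0 ≤ G z) {z : E × F} (hz : G z = 0) :
    fderivFst G z = 0 := by
  rw [fderivFst, IsLocalMin.fderiv_eq_zero (.of_forall fun y => hz ▸ h0 y),
    ContinuousLinearMap.zero_comp]

end FirstVariable

section TwoPoint

variable {E : Type*} [NormedAddCommGroup E] [InnerProductSpace ℝ E] [FiniteDimensional ℝ E]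
  [MeasurableSpace E] [BorelSpace E] {μ ν : Measure E} [μ.IsAddHaarMeasure] [SFinite ν]
  {G : E × E → ℝ}

theorem lintegral_prod_div_norm_sub_le (h0 : ∀ z, 0 ≤ G z) (hG : Integrable G (μ.prod ν))
    (hd : Differentiable ℝ G) :
    ENNReal.ofReal (finrank ℝ E - 1) * ∫⁻ z, ENNReal.ofReal (G z / ‖z.1 - z.2‖) ∂μ.prod ν
      ≤ ∫⁻ z, ‖fderivFst G z‖ₑ ∂μ.prod ν := by
  have hmeas : Measurable fun z : E × E => ENNReal.ofReal (G z / ‖z.1 - z.2‖) :=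
    (hd.continuous.measurable.div (by fun_prop)).ennreal_ofReal
  rw [lintegral_prod_symm _ hmeas.aemeasurable,
    lintegral_prod_symm _ (measurable_fderivFst G).enorm.aemeasurable,
    ← lintegral_const_mul _ hmeas.lintegral_prod_left']
  refine lintegral_mono_ae ?_
  filter_upwards [hG.prod_left_ae] with w hw
  simp only [← fderiv_slice_eq_fderivFst hd]
  exact lintegral_div_norm_sub_le (fun v => h0 (v, w))
    (hd.comp (differentiable_id.prodMk (differentiable_const w))) hw w

theorem coulomb_singularity_fisher_bound_general (h0 : ∀ z, 0 ≤ G z)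
    (hG : Integrable G (μ.prod ν)) (hd : Differentiable ℝ G)
    (hI : Integrable (fun z => ‖fderivFst G z‖ ^ 2 / G z) (μ.prod ν))
    (hE : 1 < finrank ℝ E) :
    Integrable (fun z => G z / ‖z.1 - z.2‖) (μ.prod ν) ∧
      ∫ z, G z / ‖z.1 - z.2‖ ∂μ.prod ν
        ≤ √((∫ z, ‖fderivFst G z‖ ^ 2 / G z ∂μ.prod ν) * ∫ z, G z ∂μ.prod ν)
          / (finrank ℝ E - 1) := by
  obtain ⟨hgrad, hle⟩ := integrable_and_integral_norm_le_sqrt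
    (measurable_fderivFst G).aestronglyMeasurable h0
    (fun _ => fderivFst_eq_zero_of_nonneg_of_eq_zero h0) hG hI
  have hdim : (0 : ℝ) < finrank ℝ E - 1 := sub_pos.2 (mod_cast hE)
  have hnonneg (z : E × E) : 0 ≤ G z / ‖z.1 - z.2‖ := div_nonneg (h0 z) (norm_nonneg _)
  have hmeas : AEStronglyMeasurable (fun z : E × E => G z / ‖z.1 - z.2‖) (μ.prod ν) :=
    (hd.continuous.measurable.div (by fun_prop)).aestronglyMeasurable
  have hlint : ∫⁻ z, ENNReal.ofReal (G z / ‖z.1 - z.2‖) ∂μ.prod ν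
      ≤ ENNReal.ofReal ((∫ z, ‖fderivFst G z‖ ∂μ.prod ν) / (finrank ℝ E - 1)) := by
    rw [ENNReal.ofReal_div_of_pos hdim, ofReal_integral_norm_eq_lintegral_enorm hgrad,
      ENNReal.le_div_iff_mul_le (.inl (by simpa using hdim)) (.inl ENNReal.ofReal_ne_top), mul_comm]
    exact lintegral_prod_div_norm_sub_le h0 hG hd
  refine ⟨⟨hmeas, ?_⟩, ?_⟩
  · rw [hasFiniteIntegral_iff_ofReal (ae_of_all _ hnonneg)]
    exact hlint.trans_lt ENNReal.ofReal_lt_top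
  · rw [integral_eq_lintegral_of_nonneg_ae (ae_of_all _ hnonneg) hmeas]
    refine (ENNReal.toReal_le_of_le_ofReal (by positivity) hlint).trans ?_
    gcongr

end TwoPoint

section Coordinates

/-- The identification of `ℝ³ × ℝ³`, each factor with its Euclidean norm, with `V3 × V3`, whose
factors carry the sup norm. -/
def ofEuclidean : (EuclideanSpace ℝ (Fin 3) × EuclideanSpace ℝ (Fin 3)) ≃L[ℝ] V3 × V3 :=
  (EuclideanSpace.equiv (Fin 3) ℝ).prodCongr (EuclideanSpace.equiv (Fin 3) ℝ)

lemma measurePreserving_ofEuclidean : MeasurePreserving ofEuclidean :=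
  (PiLp.volume_preserving_ofLp (Fin 3)).prod (PiLp.volume_preserving_ofLp (Fin 3))

lemma measurableEmbedding_ofEuclidean : MeasurableEmbedding ofEuclidean :=
  ofEuclidean.toHomeomorph.measurableEmbedding

lemma nrm3_ofEuclidean_sub (z : EuclideanSpace ℝ (Fin 3) × EuclideanSpace ℝ (Fin 3)) :
    nrm3 ((ofEuclidean z).1 - (ofEuclidean z).2) = ‖z.1 - z.2‖ := by
  simp [EuclideanSpace.norm_eq, nrm3, sq3, ofEuclidean]

variable {G : V3 × V3 → ℝ}

lemma sq_norm_fderivFst_comp_ofEuclidean (G : V3 × V3 → ℝ)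
    (z : EuclideanSpace ℝ (Fin 3) × EuclideanSpace ℝ (Fin 3)) :
    ‖fderivFst (G ∘ ofEuclidean) z‖ ^ 2 = ∑ α, pdv G (ofEuclidean z) α ^ 2 := by
  rw [(EuclideanSpace.basisFun (Fin 3) ℝ).norm_dual]
  refine Finset.sum_congr rfl fun α _ => ?_
  rw [fderivFst, ofEuclidean.comp_right_fderiv, EuclideanSpace.basisFun_apply]
  rfl

lemma sum_sq_pdv_div_le (h0 : ∀ z, 0 ≤ G z) (z : V3 × V3) :
    (∑ α, pdv G z α ^ 2) / G z ≤ (∑ α, (pdv G z α ^ 2 + pdw G z α ^ 2)) / G z := by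
  have := h0 z
  gcongr
  exact le_add_of_nonneg_right (sq_nonneg _)

lemma integrable_sum_sq_pdv_div (h0 : ∀ z, 0 ≤ G z) (hd : Differentiable ℝ G)
    (hI : Integrable fun z => (∑ α, (pdv G z α ^ 2 + pdw G z α ^ 2)) / G z) :
    Integrable fun z => (∑ α, pdv G z α ^ 2) / G z := by
  have hmeas : Measurable fun z => (∑ α, pdv G z α ^ 2) / G z :=
    (Finset.measurable_sum _ fun α _ => (measurable_fderiv_apply_const ℝ G _).pow_const 2).div
      hd.continuous.measurable
  refine hI.mono' hmeas.aestronglyMeasurable (ae_of_all _ fun z => ?_)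
  rw [norm_of_nonneg (div_nonneg (by positivity) (h0 z))]
  exact sum_sq_pdv_div_le h0 z

lemma integrable_and_integral_div_nrm3_le (h0 : ∀ z, 0 ≤ G z) (hG : Integrable G)
    (hd : Differentiable ℝ G)
    (hI : Integrable fun z => (∑ α, (pdv G z α ^ 2 + pdw G z α ^ 2)) / G z) :
    Integrable (fun z => G z / nrm3 (z.1 - z.2)) ∧
      ∫ z, G z / nrm3 (z.1 - z.2) ≤ √(fisher2 G * ∫ z, G z) / 2 := by
  have hint_iff {f : V3 × V3 → ℝ} : Integrable (fun z => f (ofEuclidean z)) ↔ Integrable f :=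
    measurePreserving_ofEuclidean.integrable_comp_emb measurableEmbedding_ofEuclidean
  have hintegral (f : V3 × V3 → ℝ) : ∫ z, f (ofEuclidean z) = ∫ z, f z :=
    measurePreserving_ofEuclidean.integral_comp measurableEmbedding_ofEuclidean f
  have hIv := integrable_sum_sq_pdv_div h0 hd hI
  have hfisher : ∫ z, (∑ α, pdv G z α ^ 2) / G z ≤ fisher2 G :=
    integral_mono hIv hI (sum_sq_pdv_div_le h0)
  obtain ⟨hint, hle⟩ := coulomb_singularity_fisher_bound_general (G := G ∘ ofEuclidean)
    (μ := volume) (ν := volume) (fun z => h0 _) (hint_iff.2 hG)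
    (hd.comp ofEuclidean.differentiable)
    (by simpa only [sq_norm_fderivFst_comp_ofEuclidean, Function.comp_apply] using! hint_iff.2 hIv)
    (by simp)
  simp only [sq_norm_fderivFst_comp_ofEuclidean, ← nrm3_ofEuclidean_sub, Function.comp_apply,
    ← Measure.volume_eq_prod] at hint hle
  rw [hintegral fun z => G z / nrm3 (z.1 - z.2), hintegral fun z => (∑ α, pdv G z α ^ 2) / G z,
    hintegral G, finrank_euclideanSpace_fin] at hle
  refine ⟨hint_iff.1 hint, hle.trans ?_⟩
  have hdim : ((3 : ℕ) : ℝ) - 1 = 2 := by norm_num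
  rw [hdim]
  gcongr
  exact integral_nonneg h0

end Coordinates

/-- For every `R > 0` there is `C(R)` such that for every probability density `G`
on ℝ³ × ℝ³ with finite Fisher information,
`∫_{B_R × B_R} G(v,w)/|v−w| ≤ C(R)(1 + I(G))`. -/
theorem coulomb_singularity_fisher_bound :
    ∀ R : ℝ, 0 < R → ∃ C : ℝ, 0 < C ∧
      ∀ G : V3 × V3 → ℝ, Measurable G → (∀ z, 0 ≤ G z) →
        (∫ z : V3 × V3, G z) = 1 → Differentiable ℝ G →
        Integrable (fun z : V3 × V3 => (∑ α, ((pdv G z α) ^ 2 + (pdw G z α) ^ 2)) / G z) →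
        (∫ z in {p : V3 × V3 | nrm3 p.1 ≤ R ∧ nrm3 p.2 ≤ R}, G z / nrm3 (z.1 - z.2))
          ≤ C * (1 + fisher2 G) := by
  intro R _
  refine ⟨1, one_pos, fun G _ h0 hmass hd hI => ?_⟩
  have hG : Integrable G := .of_integral_ne_zero (hmass ▸ one_ne_zero)
  obtain ⟨hint, hle⟩ := integrable_and_integral_div_nrm3_le h0 hG hd hI
  have hfisher : 0 ≤ fisher2 G := integral_nonneg fun z =>
    div_nonneg (by positivity) (h0 z)
  calc ∫ z in {p : V3 × V3 | nrm3 p.1 ≤ R ∧ nrm3 p.2 ≤ R}, G z / nrm3 (z.1 - z.2)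
      ≤ ∫ z, G z / nrm3 (z.1 - z.2) :=
        setIntegral_le_integral hint (ae_of_all _ fun z => div_nonneg (h0 z) (sqrt_nonneg _))
    _ ≤ √(fisher2 G) / 2 := by simpa only [hmass, mul_one] using hle
    _ ≤ 1 * (1 + fisher2 G) := by nlinarith [sq_sqrt hfisher, sq_nonneg (√(fisher2 G) - 1)]
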